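/- Let G be a finite group and consider the multivariate polynomial ring ℂ[x_P : P ∈ G] in commuting variables indexed by the elements of G. Let Θ be the determinant of the G×G matrix whose (P,Q) entry is x_{P Q⁻¹} (the group determinant of G). Then in any factorization of Θ into irreducible polynomials: (i) the number of pairwise non-associated irreducible factors of Θ equals the number of conjugacy classes of G, and (ii) each irreducible factor of Θ occurs in Θ with multiplicity equal to its total degree. -/

import Mathlib

/-!
Choose a basis `b` of an algebra `A`. A linear map `f : A → Mₙ(R)` pulls the determinant back to a
polynomial in the coordinates of `A`, and `Θ` is this polynomial for the regular representation of
`ℂ[G]`. A Wedderburn isomorphism `ℂ[G] ≃ ∏ᵢ Mₙᵢ(ℂ)` turns multiplication by `a = (aᵢ)` into `nᵢ`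
copies of `aᵢ` for each `i`, so `Θ = ∏ᵢ Φᵢ ^ nᵢ` with `Φᵢ` the pullback of `det` along the `i`-th
projection. As this projection is surjective, its matrix entries are part of a coordinate system
and `Φᵢ` is a determinant of independent variables; it is therefore irreducible, of degree `nᵢ`.
The element which is `1` in the `j`-th block and `0` elsewhere separates `Φⱼ` from the other
factors, and both counts in question are the dimension of the center of `ℂ[G]`.
-/

open Module MvPolynomial

section Norm

variable {R ι : Type*} [CommRing R] [Fintype ι]

theorem det_blockDiagonal' [DecidableEq ι] {n : ι → Type*} [∀ i, Fintype (n i)]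
    [∀ i, DecidableEq (n i)] (A : ∀ i, Matrix (n i) (n i) R) :
    (Matrix.blockDiagonal' A).det = ∏ i, (A i).det := by
  let _ : LinearOrder ι := IsWellOrder.linearOrder WellOrderingRel
  rw [(Matrix.blockTriangular_blockDiagonal' A).det_fintype]
  refine Finset.prod_congr rfl fun i _ => ?_
  let blockIndex : n i ≃ {x : Σ i, n i // x.1 = i} := Equiv.ofBijective (fun r => ⟨⟨i, r⟩, rfl⟩)
    ⟨fun r s h => by simpa using h, by rintro ⟨⟨_, r⟩, rfl⟩; exact ⟨r, rfl⟩⟩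
  rw [← Matrix.det_submatrix_equiv_self blockIndex]
  congr 1
  ext r s
  exact Matrix.blockDiagonal'_apply_eq A i r s

theorem algebraNorm_pi {A : ι → Type*} [∀ i, Ring (A i)] [∀ i, Algebra R (A i)]
    [∀ i, Module.Free R (A i)] [∀ i, Module.Finite R (A i)] (a : ∀ i, A i) :
    Algebra.norm R a = ∏ i, Algebra.norm R (a i) := by
  classical
  let b i := Module.Free.chooseBasis R (A i)
  have hblock : Algebra.leftMulMatrix (Pi.basis b) a =
      Matrix.blockDiagonal' fun i => Algebra.leftMulMatrix (b i) (a i) := by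
    ext ⟨i, r⟩ ⟨j, s⟩
    rw [Algebra.leftMulMatrix_eq_repr_mul, Pi.basis_apply, Pi.basis_repr, Pi.mul_apply]
    obtain rfl | hij := eq_or_ne i j
    · rw [Pi.single_eq_same, Matrix.blockDiagonal'_apply_eq, Algebra.leftMulMatrix_eq_repr_mul]
    · rw [Pi.single_eq_of_ne hij, Matrix.blockDiagonal'_apply_ne _ _ _ hij]
      simp
  rw [Algebra.norm_eq_matrix_det (Pi.basis b), hblock, det_blockDiagonal']
  exact Finset.prod_congr rfl fun i _ => (Algebra.norm_eq_matrix_det (b i) (a i)).symm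

open scoped Kronecker in
theorem algebraNorm_matrix {n : Type*} [Fintype n] [DecidableEq n] (A : Matrix n n R) :
    Algebra.norm R A = A.det ^ Fintype.card n := by
  have hkronecker : Algebra.leftMulMatrix (Matrix.stdBasis R n n) A = A ⊗ₖ 1 := by
    ext ⟨r, s⟩ ⟨r', s'⟩
    rw [Algebra.leftMulMatrix_eq_repr_mul, Matrix.stdBasis_eq_single]
    obtain rfl | hs := eq_or_ne s s'
    · simp [Matrix.stdBasis]
    · simp [Matrix.stdBasis, hs]
  rw [Algebra.norm_eq_matrix_det (Matrix.stdBasis R n n), hkronecker, Matrix.det_kronecker]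
  simp

end Norm

section Center

theorem finrank_center_congr {R A B : Type*} [CommSemiring R] [Semiring A] [Semiring B]
    [Algebra R A] [Algebra R B] (e : A ≃ₐ[R] B) :
    finrank R (Subalgebra.center R A) = finrank R (Subalgebra.center R B) :=
  LinearEquiv.finrank_eq
    { Subsemiring.centerCongr e.toRingEquiv with
      map_smul' := fun r x => Subtype.ext (map_smul e r (x : A)) }

theorem finrank_center_pi {R ι : Type*} [CommRing R] [StrongRankCondition R] [Fintype ι]
    {A : ι → Type*} [∀ i, Ring (A i)] [∀ i, Algebra R (A i)] [∀ i, Algebra.IsCentral R (A i)]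
    [∀ i, FaithfulSMul R (A i)] :
    finrank R (Subalgebra.center R (∀ i, A i)) = Fintype.card ι := by
  let scalars : (ι → R) →ₗ[R] ∀ i, A i := LinearMap.piMap fun i => Algebra.linearMap R (A i)
  have hcenter :
      Subalgebra.toSubmodule (Subalgebra.center R (∀ i, A i)) = LinearMap.range scalars := by
    ext a
    rw [Subalgebra.mem_toSubmodule, Subalgebra.center_pi]
    simp [scalars, funext_iff, Algebra.mem_bot, Classical.skolem]
  have hinj : Function.Injective scalars :=
    Function.Injective.piMap fun i => FaithfulSMul.algebraMap_injective R (A i)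
  rw [← Subalgebra.finrank_toSubmodule, hcenter, LinearMap.finrank_range_of_inj hinj,
    finrank_fintype_fun_eq_card]

variable {R G : Type*} [Group G]

theorem mem_center_monoidAlgebra_iff [CommSemiring R] {a : MonoidAlgebra R G} :
    a ∈ Subalgebra.center R (MonoidAlgebra R G) ↔
      ∀ g h : G, IsConj g h → a.coeff g = a.coeff h := by
  rw [Subalgebra.mem_center_iff]
  constructor
  · intro ha g _ hgh
    obtain ⟨c, rfl⟩ := isConj_iff.1 hgh
    have hcomm := congr_arg (fun x => x.coeff (c * g)) (ha (.single c 1))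
    simpa [MonoidAlgebra.coeff_mul_single_apply, MonoidAlgebra.coeff_single_mul_apply] using hcomm
  · intro ha b
    induction b using MonoidAlgebra.induction_linear with
    | zero => simp
    | add x y hx hy => rw [add_mul, mul_add, hx, hy]
    | single g r =>
      ext h
      have hconj := ha (g⁻¹ * h) (h * g⁻¹) (isConj_iff.2 ⟨g, by group⟩)
      simp [MonoidAlgebra.coeff_mul_single_apply, MonoidAlgebra.coeff_single_mul_apply, hconj,
        mul_comm]

theorem finrank_center_monoidAlgebra [CommRing R] [StrongRankCondition R] [Finite G] :
    finrank R (Subalgebra.center R (MonoidAlgebra R G)) = Nat.card (ConjClasses G) := by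
  have := Fintype.ofFinite G
  have := Fintype.ofFinite (ConjClasses G)
  let equivFun : MonoidAlgebra R G ≃ₗ[R] (G → R) := (MonoidAlgebra.basis G R).equivFun
  let ofClassFunction : (ConjClasses G → R) →ₗ[R] MonoidAlgebra R G :=
    equivFun.symm.toLinearMap ∘ₗ LinearMap.funLeft R R ConjClasses.mk
  have hcoeff (f : ConjClasses G → R) (g : G) :
      (ofClassFunction f).coeff g = f (ConjClasses.mk g) :=
    congr_fun (equivFun.apply_symm_apply (f ∘ ConjClasses.mk)) g
  have hcenter : Subalgebra.toSubmodule (Subalgebra.center R (MonoidAlgebra R G)) =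
      LinearMap.range ofClassFunction := by
    ext a
    rw [Subalgebra.mem_toSubmodule, mem_center_monoidAlgebra_iff, LinearMap.mem_range]
    constructor
    · intro ha
      refine ⟨Quotient.lift a.coeff ha, ?_⟩
      ext g
      exact hcoeff _ g
    · rintro ⟨f, rfl⟩ g h hgh
      rw [hcoeff, hcoeff, ConjClasses.mk_eq_mk_iff_isConj.2 hgh]
  have hinj : Function.Injective ofClassFunction :=
    equivFun.symm.injective.comp
      (LinearMap.funLeft_injective_of_surjective R R _ ConjClasses.mk_surjective)
  rw [← Subalgebra.finrank_toSubmodule, hcenter, LinearMap.finrank_range_of_inj hinj,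
    finrank_fintype_fun_eq_card, Nat.card_eq_fintype_card]

end Center

section Factorization

variable {M ι : Type*} [CommMonoidWithZero M] [DecompositionMonoid M]
  [Fintype ι] {p : ι → M} {d : ι → ℕ}

theorem exists_associated_of_dvd_prod_pow (hp : ∀ i, Irreducible (p i)) {q : M}
    (hq : Irreducible q) (hdvd : q ∣ ∏ i, p i ^ d i) : ∃ i, Associated q (p i) := by
  obtain ⟨i, -, hi⟩ := hq.prime.exists_mem_finset_dvd hdvd
  exact ⟨i, hq.associated_of_dvd (hp i) (hq.prime.dvd_of_dvd_pow hi)⟩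

theorem exists_finset_irreducible_dvd_prod_pow (hp : ∀ i, Irreducible (p i))
    (hne : Pairwise fun i j => ¬ Associated (p i) (p j)) (hd : ∀ i, d i ≠ 0) :
    ∃ s : Finset M,
      (∀ q ∈ s, Irreducible q ∧ q ∣ ∏ i, p i ^ d i) ∧
      (∀ q ∈ s, ∀ r ∈ s, Associated q r → q = r) ∧
      (∀ r : M, Irreducible r → r ∣ ∏ i, p i ^ d i → ∃ q ∈ s, Associated r q) ∧
      s.card = Fintype.card ι := by
  have hinj : Function.Injective p := fun i j hij => by
    by_contra h
    exact hne h (.of_eq hij)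
  refine ⟨Finset.univ.map ⟨p, hinj⟩, ?_, ?_, ?_, by simp⟩
  · simpa using fun i => ⟨hp i, (dvd_pow_self _ (hd i)).trans
      (Finset.dvd_prod_of_mem (fun j => p j ^ d j) (Finset.mem_univ i))⟩
  · simpa using fun i j hij => congr_arg p (not_imp_comm.1 (@hne i j) (not_not.2 hij))
  · simpa using fun r hr hdvd => exists_associated_of_dvd_prod_pow hp hr hdvd

variable [IsCancelMulZero M]

theorem emultiplicity_prod_pow (hp : ∀ i, Irreducible (p i))
    (hne : Pairwise fun i j => ¬ Associated (p i) (p j)) (i : ι) :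
    emultiplicity (p i) (∏ j, p j ^ d j) = d i := by
  rw [Finset.emultiplicity_prod (hp i).prime,
    Finset.sum_eq_single_of_mem i (Finset.mem_univ i) fun j _ hji => ?_,
    emultiplicity_pow_self_of_prime (hp i).prime]
  rw [emultiplicity_eq_zero]
  exact fun h => hne hji.symm ((hp i).associated_of_dvd (hp j) ((hp i).prime.dvd_of_dvd_pow h))

end Factorization

section TotalDegree

variable {σ R : Type*} [CommRing R] [IsDomain R]

theorem totalDegree_eq_of_associated {p q : MvPolynomial σ R} (h : Associated p q) :
    p.totalDegree = q.totalDegree := by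
  obtain ⟨u, rfl⟩ := h
  obtain rfl | hp := eq_or_ne p 0
  · simp
  · rw [totalDegree_mul_of_isDomain hp u.ne_zero,
      (isUnit_iff_totalDegree_of_isReduced.1 u.isUnit).2, add_zero]

theorem emultiplicity_prod_pow_totalDegree [UniqueFactorizationMonoid R] {ι : Type*} [Fintype ι]
    {p : ι → MvPolynomial σ R} (hp : ∀ i, Irreducible (p i))
    (hne : Pairwise fun i j => ¬ Associated (p i) (p j)) {q : MvPolynomial σ R}
    (hq : Irreducible q) (hdvd : q ∣ ∏ i, p i ^ (p i).totalDegree) :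
    emultiplicity q (∏ i, p i ^ (p i).totalDegree) = q.totalDegree := by
  obtain ⟨i, hi⟩ := exists_associated_of_dvd_prod_pow hp hq hdvd
  rw [← emultiplicity_eq_of_associated_left hi, emultiplicity_prod_pow hp hne,
    totalDegree_eq_of_associated hi]

theorem totalDegree_ne_zero_of_irreducible {k : Type*} [Field k] {p : MvPolynomial σ k}
    (hp : Irreducible p) : p.totalDegree ≠ 0 := by
  intro h
  rw [totalDegree_eq_zero_iff_eq_C] at h
  refine hp.not_isUnit (h ▸ (IsUnit.mk0 _ fun h0 => hp.ne_zero ?_).map C)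
  rw [h, h0, C_0]

end TotalDegree

section DeterminantOfVariables

variable {σ R : Type*} [CommRing R]

theorem det_mem_supported {n : Type*} [Fintype n] [DecidableEq n] {s : Set σ}
    {A : Matrix n n (MvPolynomial σ R)} (hA : ∀ i j, A i j ∈ supported R s) :
    A.det ∈ supported R s := by
  rw [Matrix.det_apply']
  exact sum_mem fun τ _ => mul_mem (intCast_mem _ _) (prod_mem fun i _ => hA _ _)

theorem isHomogeneous_det {n : Type*} [Fintype n] [DecidableEq n] {d : ℕ}
    {A : Matrix n n (MvPolynomial σ R)} (hA : ∀ i j, (A i j).IsHomogeneous d) :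
    A.det.IsHomogeneous (Fintype.card n * d) := by
  rw [Matrix.det_apply]
  refine IsHomogeneous.sum _ _ _ fun τ _ => zsmul_mem (K := homogeneousSubmodule σ R _) ?_ _
  simpa using IsHomogeneous.prod Finset.univ _ (fun _ => d) fun i _ => hA (τ i) i

theorem exists_map_eval_X_eq {m n : Type*} {f : m → n → σ} (hf : Function.Injective2 f)
    (A : Matrix m n R) :
    ∃ v : σ → R, (Matrix.of fun i j => (X (f i j) : MvPolynomial σ R)).map (eval v) = A := by
  refine ⟨Function.extend (Function.uncurry f) (Function.uncurry A) 0, ?_⟩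
  ext i j
  rw [Matrix.map_apply, Matrix.of_apply, eval_X]
  exact hf.uncurry.extend_apply (Function.uncurry A) 0 (i, j)

theorem not_det_submatrix_succ_dvd_det_X [Nontrivial R] {n : ℕ}
    {f : Fin (n + 2) → Fin (n + 2) → σ} (hf : Function.Injective2 f) :
    ¬ (Matrix.of fun i j : Fin (n + 1) => (X (f i.succ j.succ) : MvPolynomial σ R)).det ∣
      (Matrix.of fun i j => X (f i j)).det := by
  intro hdvd
  -- Swapping the first two rows of the identity matrix leaves the minor with a zero row.
  let P : Matrix (Fin (n + 2)) (Fin (n + 2)) R := (Equiv.swap 0 1).toPEquiv.toMatrix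
  obtain ⟨v, hv⟩ := exists_map_eval_X_eq hf P
  have hminor : (P.submatrix Fin.succ Fin.succ).det = 0 :=
    Matrix.det_eq_zero_of_row_eq_zero 0 fun j => by simp [P, PEquiv.toMatrix_apply, eq_comm]
  have hsub : (Matrix.of fun i j : Fin (n + 1) => (X (f i.succ j.succ) : MvPolynomial σ R)).map
      (eval v) = P.submatrix Fin.succ Fin.succ := by
    rw [← hv]
    rfl
  have hdvd_eval := map_dvd (eval v) hdvd
  rw [RingHom.map_det, RingHom.map_det, RingHom.mapMatrix_apply, RingHom.mapMatrix_apply, hsub, hv,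
    hminor, Matrix.det_permutation, zero_dvd_iff] at hdvd_eval
  simp at hdvd_eval

variable [IsDomain R]

/- The determinant is linear in the top left variable, with an irreducible minor as coefficient. -/
theorem irreducible_det_X_fin (n : ℕ) {f : Fin (n + 1) → Fin (n + 1) → σ}
    (hf : Function.Injective2 f) :
    Irreducible (Matrix.of fun i j => (X (f i j) : MvPolynomial σ R)).det := by
  induction n with
  | zero => simpa using (X_prime (i := f 0 0)).irreducible
  | succ n ih =>
    set A : Matrix (Fin (n + 2)) (Fin (n + 2)) (MvPolynomial σ R) := Matrix.of fun i j => X (f i j)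
      with hA
    have hentry : ∀ i j, (i, j) ≠ 0 → A i j ∈ supported R {f 0 0}ᶜ := fun i j hij => by
      rw [hA, Matrix.of_apply, X_mem_supported]
      exact fun h => hij (Prod.ext_iff.2 (hf h))
    have hminor : ∀ j : Fin (n + 2),
        (A.submatrix Fin.succ j.succAbove).det ∈ supported R {f 0 0}ᶜ := fun j =>
      det_mem_supported fun k l => hentry _ _ (by simp [Prod.ext_iff])
    have hirr : Irreducible (A.submatrix Fin.succ Fin.succ).det :=
      ih fun _ _ _ _ h => by simpa using hf h
    set g := ∑ j : Fin (n + 1), (-1) ^ (j.succ : ℕ) * A 0 j.succ *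
      (A.submatrix Fin.succ j.succ.succAbove).det with hg
    have hgmem : g ∈ supported R {f 0 0}ᶜ := sum_mem fun j _ =>
      mul_mem (mul_mem (pow_mem (neg_mem (one_mem _)) _) (hentry _ _ (by simp [Prod.ext_iff])))
        (hminor _)
    have hdet : A.det = (A.submatrix Fin.succ Fin.succ).det * X (f 0 0) + g := by
      rw [Matrix.det_succ_row_zero, Fin.sum_univ_succ]
      simp [hg, A, mul_comm]
    have hvars : ∀ p ∈ supported R {f 0 0}ᶜ, f 0 0 ∉ p.vars := fun p hp h =>
      mem_supported.1 hp h rfl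
    rw [hdet]
    refine irreducible_mul_X_add _ _ _ hirr.ne_zero (hvars _ (hminor 0)) (hvars _ hgmem) ?_
    rw [hirr.isRelPrime_iff_not_dvd]
    exact fun hdvd => not_det_submatrix_succ_dvd_det_X hf
      (hdet ▸ dvd_add (dvd_mul_right _ _) hdvd)

theorem irreducible_det_X {n : Type*} [Fintype n] [DecidableEq n] [Nonempty n] {f : n → n → σ}
    (hf : Function.Injective2 f) :
    Irreducible (Matrix.of fun i j => (X (f i j) : MvPolynomial σ R)).det := by
  obtain ⟨m, hm⟩ := Nat.exists_eq_succ_of_ne_zero (Fintype.card_ne_zero (α := n))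
  let enum : Fin (m + 1) ≃ n := (Fintype.equivFinOfCardEq hm).symm
  rw [← Matrix.det_submatrix_equiv_self enum]
  exact irreducible_det_X_fin m fun _ _ _ _ h => by simpa using hf h

end DeterminantOfVariables

section GenericDet

variable {R V W ι κ n : Type*} [CommRing R] [AddCommGroup V] [Module R V] [AddCommGroup W]
  [Module R W] [Fintype ι] [DecidableEq ι] [Fintype κ] [DecidableEq κ] [Fintype n] [DecidableEq n]

/-- The isomorphism of polynomial rings which substitutes for the coordinates of `W` their
expressions, under a linear equivalence `V ≃ W`, as linear forms in the coordinates of `V`. -/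
noncomputable def coordinateChange (b : Basis ι R V) (c : Basis κ R W) (e : V ≃ₗ[R] W) :
    MvPolynomial κ R ≃ₐ[R] MvPolynomial ι R :=
  AlgEquiv.ofAlgHom (bind₁ (e.toLinearMap.toMvPolynomial b c))
    (bind₁ (e.symm.toLinearMap.toMvPolynomial c b))
    (by
      ext i : 1
      simp [← LinearMap.toMvPolynomial_comp])
    (by
      ext i : 1
      simp [← LinearMap.toMvPolynomial_comp])

/-- The pullback of the determinant along a linear map `f : V → Mₙ(R)`, as a polynomial in the
coordinates of `V`: the determinant of the matrix of linear forms given by the entries of `f`. -/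
noncomputable def genericDet (b : Basis ι R V) (f : V →ₗ[R] Matrix n n R) : MvPolynomial ι R :=
  (Matrix.of fun r s => f.toMvPolynomial b (Matrix.stdBasis R n n) (r, s)).det

theorem eval_genericDet (b : Basis ι R V) (f : V →ₗ[R] Matrix n n R) (v : V) :
    eval (b.repr v) (genericDet b f) = (f v).det := by
  rw [genericDet, RingHom.map_det]
  congr 1
  ext r s
  simp [LinearMap.toMvPolynomial_eval_eq_apply, Matrix.stdBasis]

theorem isHomogeneous_genericDet (b : Basis ι R V) (f : V →ₗ[R] Matrix n n R) :
    (genericDet b f).IsHomogeneous (Fintype.card n) := by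
  rw [genericDet, ← mul_one (Fintype.card n)]
  exact isHomogeneous_det fun r s => f.toMvPolynomial_isHomogeneous b _ (r, s)

theorem not_associated_genericDet [Nontrivial R] {m : Type*} [Fintype m] [DecidableEq m]
    [Nonempty m] (b : Basis ι R V) {f : V →ₗ[R] Matrix m m R} {g : V →ₗ[R] Matrix n n R} {v : V}
    (hf : f v = 0) (hg : g v = 1) : ¬ Associated (genericDet b f) (genericDet b g) := by
  intro h
  simpa [eval_genericDet, hf, hg] using map_dvd (eval (b.repr v)) h.dvd

/- A surjection `f` splits, so that its matrix entries become coordinates on `V ≃ Mₙ(k) × ker f`. -/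
theorem irreducible_genericDet {k : Type*} [Field k] [Module k V] [Nonempty n] (b : Basis ι k V)
    {f : V →ₗ[k] Matrix n n k} (hf : Function.Surjective f) : Irreducible (genericDet b f) := by
  obtain ⟨q, hq⟩ := (LinearMap.ker f).exists_isCompl
  let e : V ≃ₗ[k] Matrix n n k × LinearMap.ker f :=
    f.equivProdOfSurjectiveOfIsCompl (Submodule.projectionOnto _ q hq)
      (LinearMap.range_eq_top.2 hf) (by simp) (by simpa using hq)
  have := Module.Finite.of_basis b
  let c := (Matrix.stdBasis k n n).prod (finBasis k (LinearMap.ker f))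
  have hcoord : genericDet b f =
      coordinateChange b c e (Matrix.of fun r s => X (Sum.inl (r, s))).det := by
    rw [genericDet, AlgEquiv.map_det]
    congr 1
    ext r s : 1
    simp [coordinateChange, LinearMap.toMvPolynomial, Matrix.toMvPolynomial,
      LinearMap.toMatrix_apply, c, e]
  rw [hcoord, MulEquiv.irreducible_iff]
  exact irreducible_det_X fun _ _ _ _ h => by simpa using h

end GenericDet

section NormForm

variable {R A ι κ : Type*} [CommRing R] [Ring A] [Algebra R A] [Fintype κ] [DecidableEq κ]
  (b : Basis κ R A)

/-- The norm form of an algebra: its norm as a polynomial in the coordinates with respect to `b`.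
The group determinant is the norm form of the group algebra. -/
noncomputable def normForm : MvPolynomial κ R :=
  genericDet b (Algebra.leftMulMatrix b).toLinearMap

theorem eval_normForm (a : A) : eval (b.repr a) (normForm b) = Algebra.norm R a := by
  rw [normForm, eval_genericDet, Algebra.norm_eq_matrix_det b, AlgHom.toLinearMap_apply]

theorem normForm_monoidAlgebra (R G : Type*) [CommRing R] [Group G] [Fintype G] [DecidableEq G] :
    normForm (MonoidAlgebra.basis G R) = (Matrix.of fun P Q : G => X (P * Q⁻¹)).det := by
  rw [normForm, genericDet]
  congr 1
  ext P Q : 1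
  have hentry (g : G) : Algebra.leftMulMatrix (MonoidAlgebra.basis G R)
      (MonoidAlgebra.basis G R g) P Q = if g = P * Q⁻¹ then 1 else 0 := by
    simp [Algebra.leftMulMatrix_eq_repr_mul, MonoidAlgebra.basis, Finsupp.single_apply,
      eq_mul_inv_iff_mul_eq]
  simp [LinearMap.toMvPolynomial, Matrix.toMvPolynomial, LinearMap.toMatrix_apply, Matrix.stdBasis,
    hentry, apply_ite, X, -MonoidAlgebra.basis_apply]

theorem normForm_eq_prod_genericDet [IsDomain R] [Infinite R] [Fintype ι] {n : ι → Type*}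
    [∀ i, Fintype (n i)] [∀ i, DecidableEq (n i)] (e : A ≃ₐ[R] ∀ i, Matrix (n i) (n i) R) :
    normForm b =
      ∏ i, genericDet b (LinearMap.proj i ∘ₗ e.toLinearMap) ^ Fintype.card (n i) := by
  refine funext fun v => ?_
  obtain ⟨a, rfl⟩ : ∃ a, ⇑(b.repr a) = v := ⟨b.equivFun.symm v, b.equivFun.apply_symm_apply v⟩
  rw [eval_normForm, ← Algebra.norm_eq_of_algEquiv e, algebraNorm_pi]
  simp [algebraNorm_matrix, eval_genericDet]

theorem exists_normForm_eq_prod_pow_totalDegree {k : Type*} [Field k] [IsAlgClosed k] [Algebra k A]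
    [IsSemisimpleRing A] (b : Basis κ k A) :
    ∃ p : Fin (finrank k (Subalgebra.center k A)) → MvPolynomial κ k,
      (∀ i, Irreducible (p i)) ∧ (Pairwise fun i j => ¬ Associated (p i) (p j)) ∧
      normForm b = ∏ i, p i ^ (p i).totalDegree := by
  have := Module.Finite.of_basis b
  obtain ⟨m, d, hd, ⟨e⟩⟩ := IsSemisimpleRing.exists_algEquiv_pi_matrix_of_isAlgClosed k A
  have hm : finrank k (Subalgebra.center k A) = m := by
    rw [finrank_center_congr e, finrank_center_pi, Fintype.card_fin]
  rw [hm]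
  let block i : A →ₗ[k] Matrix (Fin (d i)) (Fin (d i)) k := LinearMap.proj i ∘ₗ e.toLinearMap
  have hirr i : Irreducible (genericDet b (block i)) := irreducible_genericDet b
    ((Function.surjective_eval i).comp e.surjective)
  refine ⟨fun i => genericDet b (block i), hirr, fun i j hij => ?_, ?_⟩
  · exact not_associated_genericDet b (v := e.symm (Pi.single j 1)) (by simp [block, hij])
      (by simp [block])
  · rw [normForm_eq_prod_genericDet b e]
    exact Finset.prod_congr rfl fun i _ => by
      rw [(isHomogeneous_genericDet b (block i)).totalDegree (hirr i).ne_zero]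

end NormForm

theorem group_determinant_factorization_general
    (k G : Type*) [Field k] [IsAlgClosed k] [Group G] [Fintype G] [DecidableEq G]
    [NeZero (Nat.card G : k)] :
    ∀ Θ : MvPolynomial G k,
      Θ = Matrix.det (Matrix.of fun P Q : G => MvPolynomial.X (P * Q⁻¹)) →
      ((∃ s : Finset (MvPolynomial G k),
          (∀ Φ ∈ s, Irreducible Φ ∧ Φ ∣ Θ) ∧
          (∀ Φ ∈ s, ∀ Ψ ∈ s, Associated Φ Ψ → Φ = Ψ) ∧
          (∀ Ψ : MvPolynomial G k, Irreducible Ψ → Ψ ∣ Θ → ∃ Φ ∈ s, Associated Ψ Φ) ∧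
          s.card = Nat.card (ConjClasses G)) ∧
        (∀ Φ : MvPolynomial G k, Irreducible Φ → Φ ∣ Θ →
          Φ ^ Φ.totalDegree ∣ Θ ∧ ¬ Φ ^ (Φ.totalDegree + 1) ∣ Θ)) := by
  rintro Θ rfl
  obtain ⟨p, hirr, hne, hprod⟩ :=
    exists_normForm_eq_prod_pow_totalDegree (MonoidAlgebra.basis G k)
  rw [← normForm_monoidAlgebra k G, hprod]
  constructor
  · simpa only [Fintype.card_fin, finrank_center_monoidAlgebra] using
      exists_finset_irreducible_dvd_prod_pow hirr hne
        fun i => totalDegree_ne_zero_of_irreducible (hirr i)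
  · exact fun Φ hΦ hdvd =>
      emultiplicity_eq_coe.1 (emultiplicity_prod_pow_totalDegree hirr hne hΦ hdvd)

/-- Frobenius' theorem on the group determinant `Θ = det (x_{PQ⁻¹})` of a finite
group `G`: the number of pairwise non-associated irreducible factors of `Θ` equals
the number of conjugacy classes of `G`, and each irreducible factor of `Θ` occurs in
`Θ` with multiplicity equal to its total degree. -/
theorem group_determinant_factorization
    (G : Type*) [Group G] [Fintype G] [DecidableEq G] :
    ∀ Θ : MvPolynomial G ℂ,
      Θ = Matrix.det (Matrix.of fun P Q : G => MvPolynomial.X (P * Q⁻¹)) →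
      ((∃ s : Finset (MvPolynomial G ℂ),
          (∀ Φ ∈ s, Irreducible Φ ∧ Φ ∣ Θ) ∧
          (∀ Φ ∈ s, ∀ Ψ ∈ s, Associated Φ Ψ → Φ = Ψ) ∧
          (∀ Ψ : MvPolynomial G ℂ, Irreducible Ψ → Ψ ∣ Θ → ∃ Φ ∈ s, Associated Ψ Φ) ∧
          s.card = Nat.card (ConjClasses G)) ∧
        (∀ Φ : MvPolynomial G ℂ, Irreducible Φ → Φ ∣ Θ →
          Φ ^ Φ.totalDegree ∣ Θ ∧ ¬ Φ ^ (Φ.totalDegree + 1) ∣ Θ)) :=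
  group_determinant_factorization_general ℂ G
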